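/- Let W : SL(2) → ℝ be objective, isotropic and bounded below, let φ̃ : ℝ → ℝ be the even function with W(F) = φ̃(√(‖F‖² − 2)) for all F ∈ SL(2), and let W̄ : ℝ^{2×2} → ℝ, W̄(F) = φ̃(√(‖F‖² − 2·det F)) be its conformal-type extension. Then the incompressible envelopes agree with the restrictions of the unconstrained envelopes: for all F ∈ SL(2), RW(F) = R W̄(F) and CW(F) = C W̄(F), where RW(F) = sup{ w(F) : w : SL(2) → ℝ rank-one convex, w ≤ W }, CW(F) = sup{ w(F) : w : ℝ^{2×2} → ℝ convex, w ≤ W on SL(2) }, R W̄(F) = sup{ w(F) : w : ℝ^{2×2} → ℝ rank-one convex, w ≤ W̄ on ℝ^{2×2} }, and C W̄(F) = sup{ w(F) : w : ℝ^{2×2} → ℝ convex, w ≤ W̄ on ℝ^{2×2} }. -/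

import Mathlib

/-!
All four envelopes coincide at every `F` with `det F = 1`. Convex functions on all matrices are
rank-one convex, and rank-one convexity and `w ≤ W̄` restrict to `SL(2)`, so it is enough to
dominate every rank-one convex minorant `w` of `W` on `SL(2)` by a convex minorant `v` of `W̄` on
all matrices with `w F ≤ v F` (`exists_convex_minorant`).

To construct `v`, consider the lines `s ↦ A + s • H` in `SL(2)` that are simple shears up to
rotations, normalised by `‖A + s • H‖² = 2 + s²` (`IsShearLine`). Along such a line `w` is convex
and bounded by `φ̃(|s|)`, so `shearSup w s`, the supremum of `w (A + s • H)` over all shear lines, is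
convex; replacing `H` by `-H` shows that it is even, hence it is monotone on `[0, ∞)`. The number
`√(‖X‖² − 2 det X)` is the norm of `(X₀₀ − X₁₁, X₀₁ + X₁₀)`, thus a convex function of `X`, and
`v X = shearSup w √(‖X‖² − 2 det X)` is convex. Finally `w F ≤ v F` because each `F ∈ SL(2)` lies
on a shear line (`exists_shearLine`): such a line is built from a unit vector `m` with `‖F m‖ = 1`.
-/

/-- The squared Frobenius norm of a real 2×2 matrix. -/
noncomputable def frobSq (F : Matrix (Fin 2) (Fin 2) ℝ) : ℝ := ∑ i, ∑ j, (F i j) ^ 2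

/-- Membership in the special orthogonal group SO(2). -/
def SO2 (R : Matrix (Fin 2) (Fin 2) ℝ) : Prop := R.transpose * R = 1 ∧ R.det = 1

/-- Rank-one convexity of a function on SL(2). -/
def RankOneConvexOnSL2 (w : Matrix (Fin 2) (Fin 2) ℝ → ℝ) : Prop :=
  ∀ F H : Matrix (Fin 2) (Fin 2) ℝ, H.rank = 1 → F.det = 1 → (F + H).det = 1 →
    ∀ t ∈ Set.Icc (0 : ℝ) 1, w (F + t • H) ≤ (1 - t) * w F + t * w (F + H)

/-- Rank-one convexity of a function on `ℝ^{2×2}`. -/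
def RankOneConvexM (w : Matrix (Fin 2) (Fin 2) ℝ → ℝ) : Prop :=
  ∀ F H : Matrix (Fin 2) (Fin 2) ℝ, H.rank = 1 →
    ∀ t ∈ Set.Icc (0 : ℝ) 1, w (F + t • H) ≤ (1 - t) * w F + t * w (F + H)

/-- The rank-one convex envelope of `W : SL(2) → ℝ`. -/
noncomputable def rankOneConvexEnvelopeSL2 (W : Matrix (Fin 2) (Fin 2) ℝ → ℝ)
    (F : Matrix (Fin 2) (Fin 2) ℝ) : ℝ :=
  sSup {y : ℝ | ∃ w : Matrix (Fin 2) (Fin 2) ℝ → ℝ, RankOneConvexOnSL2 w ∧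
    (∀ X : Matrix (Fin 2) (Fin 2) ℝ, X.det = 1 → w X ≤ W X) ∧ y = w F}

/-- The convex envelope of `W : SL(2) → ℝ` (convex minorants on `ℝ^{2×2}`,
constrained only on SL(2)). -/
noncomputable def convexEnvelopeSL2 (W : Matrix (Fin 2) (Fin 2) ℝ → ℝ)
    (F : Matrix (Fin 2) (Fin 2) ℝ) : ℝ :=
  sSup {y : ℝ | ∃ w : Matrix (Fin 2) (Fin 2) ℝ → ℝ, ConvexOn ℝ Set.univ w ∧
    (∀ X : Matrix (Fin 2) (Fin 2) ℝ, X.det = 1 → w X ≤ W X) ∧ y = w F}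

/-- The rank-one convex envelope of `W̄ : ℝ^{2×2} → ℝ`. -/
noncomputable def rankOneConvexEnvelopeM (Wb : Matrix (Fin 2) (Fin 2) ℝ → ℝ)
    (F : Matrix (Fin 2) (Fin 2) ℝ) : ℝ :=
  sSup {y : ℝ | ∃ w : Matrix (Fin 2) (Fin 2) ℝ → ℝ, RankOneConvexM w ∧
    (∀ X : Matrix (Fin 2) (Fin 2) ℝ, w X ≤ Wb X) ∧ y = w F}

/-- The convex envelope of `W̄ : ℝ^{2×2} → ℝ`. -/
noncomputable def convexEnvelopeM (Wb : Matrix (Fin 2) (Fin 2) ℝ → ℝ)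
    (F : Matrix (Fin 2) (Fin 2) ℝ) : ℝ :=
  sSup {y : ℝ | ∃ w : Matrix (Fin 2) (Fin 2) ℝ → ℝ, ConvexOn ℝ Set.univ w ∧
    (∀ X : Matrix (Fin 2) (Fin 2) ℝ, w X ≤ Wb X) ∧ y = w F}

/-- A line `s ↦ A + s • H` inside `SL(2)` that is, up to rotations on either side, the simple shear
`s ↦ !![1, s; 0, 1]`; these lines are characterised by `det = 1` and `‖A + s • H‖² = 2 + s²`. -/
def IsShearLine (A H : Matrix (Fin 2) (Fin 2) ℝ) : Prop :=
  (∀ s : ℝ, (A + s • H).det = 1) ∧ ∀ s : ℝ, frobSq (A + s • H) = 2 + s ^ 2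

/-- Supremum of `w` at parameter `s` over all shear lines. -/
noncomputable def shearSup (w : Matrix (Fin 2) (Fin 2) ℝ → ℝ) (s : ℝ) : ℝ :=
  sSup {y : ℝ | ∃ A H, IsShearLine A H ∧ y = w (A + s • H)}

/-- The square root in the extension `W̄`: the length of `(X₀₀ − X₁₁, X₀₁ + X₁₀)`. -/
noncomputable def distortion (X : Matrix (Fin 2) (Fin 2) ℝ) : ℝ :=
  Real.sqrt (frobSq X - 2 * X.det)

lemma IsShearLine.neg {A H : Matrix (Fin 2) (Fin 2) ℝ} (h : IsShearLine A H) :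
    IsShearLine A (-H) := by
  refine ⟨fun s => ?_, fun s => ?_⟩
  · simpa using h.1 (-s)
  · simpa using h.2 (-s)

lemma rank_ne_zero_of_ne_zero {M : Matrix (Fin 2) (Fin 2) ℝ} (hM : M ≠ 0) : M.rank ≠ 0 := by
  intro h
  apply hM
  rw [Matrix.rank, Submodule.finrank_eq_zero, LinearMap.range_eq_bot] at h
  exact Matrix.mulVec_injective (by
    ext1 v
    simpa using LinearMap.congr_fun h v)

lemma IsShearLine.rank {A H : Matrix (Fin 2) (Fin 2) ℝ} (h : IsShearLine A H) {r : ℝ}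
    (hr : r ≠ 0) : (r • H).rank = 1 := by
  have hdet : H.det = 0 := by
    have h0 := h.1 0
    have h1 := h.1 1
    have h2 := h.1 (-1)
    simp [Matrix.det_fin_two] at h0 h1 h2 ⊢
    linarith
  have hne : r • H ≠ 0 := by
    intro h0
    have hH : H = 0 := (smul_eq_zero.mp h0).resolve_left hr
    have h1 := h.2 1
    have h2 := h.2 0
    simp [hH] at h1 h2
    linarith
  have hadj : (r • H).adjugate ≠ 0 := by
    intro h0
    apply hne
    rw [Matrix.adjugate_fin_two] at h0
    have h00 := congrFun (congrFun h0 0) 0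
    have h01 := congrFun (congrFun h0 0) 1
    have h10 := congrFun (congrFun h0 1) 0
    have h11 := congrFun (congrFun h0 1) 1
    ext i j
    fin_cases i <;> fin_cases j <;> simp_all
  -- `(r • H) * adj (r • H) = 0`, so the ranks of the two nonzero factors add up to at most `2`.
  have hle := Matrix.rank_add_rank_le_card_of_mul_eq_zero (A := r • H) (B := (r • H).adjugate)
    (by rw [Matrix.mul_adjugate]; simp [hdet])
  have h1 := rank_ne_zero_of_ne_zero hne
  have h2 := rank_ne_zero_of_ne_zero hadj
  rw [Fintype.card_fin] at hle
  omega

/-- With `m = (x, y)` and `F m = (p, q)` unit vectors, the line is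
`rot (p, q) * !![1, s; 0, 1] * (rot (x, y))ᵀ`. -/
lemma isShearLine_of_unit {p q x y : ℝ} (hpq : p ^ 2 + q ^ 2 = 1) (hxy : x ^ 2 + y ^ 2 = 1) :
    IsShearLine !![p * x + q * y, p * y - q * x; q * x - p * y, p * x + q * y]
      !![-(p * y), p * x; -(q * y), q * x] := by
  refine ⟨fun s => ?_, fun s => ?_⟩
  · simp [Matrix.det_fin_two]
    linear_combination (x ^ 2 + y ^ 2) * hpq + hxy
  · simp [frobSq, Fin.sum_univ_two]
    linear_combination (2 + s ^ 2) * (x ^ 2 + y ^ 2) * hpq + (2 + s ^ 2) * hxy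

/-- A binary quadratic form of nonpositive determinant `a * c - b ^ 2` has a zero on the unit
circle. -/
lemma exists_unit_null {a b c : ℝ} (h : a * c ≤ b ^ 2) :
    ∃ x y : ℝ, x ^ 2 + y ^ 2 = 1 ∧ a * x ^ 2 + 2 * b * (x * y) + c * y ^ 2 = 0 := by
  by_cases ha : a = 0
  · exact ⟨1, 0, by norm_num, by simp [ha]⟩
  · have hs : Real.sqrt (b ^ 2 - a * c) ^ 2 = b ^ 2 - a * c := Real.sq_sqrt (by linarith)
    set r := Real.sqrt (b ^ 2 - a * c)
    have hpos : 0 < (r - b) ^ 2 + a ^ 2 := by positivity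
    have hn : Real.sqrt ((r - b) ^ 2 + a ^ 2) ^ 2 = (r - b) ^ 2 + a ^ 2 := Real.sq_sqrt hpos.le
    have hn0 : Real.sqrt ((r - b) ^ 2 + a ^ 2) ≠ 0 := (Real.sqrt_pos.mpr hpos).ne'
    set n := Real.sqrt ((r - b) ^ 2 + a ^ 2)
    refine ⟨(r - b) / n, a / n, ?_, ?_⟩
    · field_simp
      linarith
    · field_simp
      linear_combination a * hs

/-- Every element of `SL(2)` is a shear up to rotations. -/
lemma exists_shearLine {F : Matrix (Fin 2) (Fin 2) ℝ} (hF : F.det = 1) :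
    ∃ A H : Matrix (Fin 2) (Fin 2) ℝ, ∃ s : ℝ, IsShearLine A H ∧ F = A + s • H := by
  obtain ⟨a, b, c, d, rfl⟩ : ∃ a b c d : ℝ, F = !![a, b; c, d] :=
    ⟨F 0 0, F 0 1, F 1 0, F 1 1, Matrix.eta_fin_two F⟩
  simp [Matrix.det_fin_two] at hF
  -- The form is `‖F m‖² - ‖m‖²`, whose determinant is `2 - ‖F‖² ≤ 0`.
  obtain ⟨x, y, hxy, hq⟩ := exists_unit_null (a := a ^ 2 + c ^ 2 - 1) (b := a * b + c * d)
    (c := b ^ 2 + d ^ 2 - 1) (by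
      nlinarith [sq_nonneg (a - d), sq_nonneg (b + c), congrArg (fun t => t ^ 2) hF])
  have hpq : (a * x + b * y) ^ 2 + (c * x + d * y) ^ 2 = 1 := by
    linear_combination hq + hxy
  refine ⟨_, _, (a * x + b * y) * (b * x - a * y) + (c * x + d * y) * (d * x - c * y),
    isShearLine_of_unit hpq hxy, ?_⟩
  set p := a * x + b * y with hp
  set q := c * x + d * y with hq'
  have hdet : p * (d * x - c * y) - q * (b * x - a * y) = 1 := by
    rw [hp, hq']
    linear_combination (x ^ 2 + y ^ 2) * hF + hxy
  -- The image of `(-y, x)` in the frame `(p, q)`, `(-q, p)` has coordinates `s` and `1`.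
  have e1 : b * x - a * y =
      (p * (b * x - a * y) + q * (d * x - c * y)) * p - q := by
    linear_combination (-(b * x - a * y)) * hpq - q * hdet
  have e2 : d * x - c * y =
      (p * (b * x - a * y) + q * (d * x - c * y)) * q + p := by
    linear_combination (-(d * x - c * y)) * hpq + p * hdet
  set s := p * (b * x - a * y) + q * (d * x - c * y)
  have f1 : a = p * x + q * y + s * (-(p * y)) := by
    linear_combination (-a) * hxy - x * hp - y * e1
  have f2 : b = p * y - q * x + s * (p * x) := by
    linear_combination (-b) * hxy - y * hp + x * e1
  have f3 : c = q * x - p * y + s * (-(q * y)) := by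
    linear_combination (-c) * hxy - x * hq' - y * e2
  have f4 : d = p * x + q * y + s * (q * x) := by
    linear_combination (-d) * hxy - y * hq' + x * e2
  ext i j
  fin_cases i <;> fin_cases j <;> simp <;> linarith

lemma RankOneConvexOnSL2.convexOn_shearLine {w : Matrix (Fin 2) (Fin 2) ℝ → ℝ}
    (hw : RankOneConvexOnSL2 w) {A H : Matrix (Fin 2) (Fin 2) ℝ} (h : IsShearLine A H) :
    ConvexOn ℝ Set.univ fun s : ℝ => w (A + s • H) := by
  refine ⟨convex_univ, fun s _ t _ α β _ hβ hαβ => ?_⟩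
  obtain rfl : α = 1 - β := by linarith
  by_cases hst : t = s
  · subst hst
    simp only [smul_eq_mul]
    rw [← add_mul, ← add_mul, hαβ, one_mul, one_mul]
  have hend : A + s • H + (t - s) • H = A + t • H := by module
  have key := hw (A + s • H) ((t - s) • H) (h.rank (sub_ne_zero.mpr hst)) (h.1 s)
    (by rw [hend]; exact h.1 t) β ⟨hβ, by linarith⟩
  have hmid : A + s • H + β • (t - s) • H = A + ((1 - β) • s + β • t) • H := by
    simp only [smul_eq_mul]
    module
  rw [hend, hmid] at key
  simpa using key

section ShearSup

variable {w : Matrix (Fin 2) (Fin 2) ℝ → ℝ} {φ : ℝ → ℝ}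

lemma shear_le (hφ : ∀ X : Matrix (Fin 2) (Fin 2) ℝ, X.det = 1 →
    w X ≤ φ (Real.sqrt (frobSq X - 2))) (s : ℝ) :
    ∀ y ∈ {y : ℝ | ∃ A H, IsShearLine A H ∧ y = w (A + s • H)}, y ≤ φ |s| := by
  rintro _ ⟨A, H, h, rfl⟩
  have := hφ _ (h.1 s)
  rwa [h.2 s, add_sub_cancel_left, Real.sqrt_sq_eq_abs] at this

lemma shear_nonempty (w : Matrix (Fin 2) (Fin 2) ℝ → ℝ) (s : ℝ) :
    {y : ℝ | ∃ A H, IsShearLine A H ∧ y = w (A + s • H)}.Nonempty :=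
  ⟨_, _, _, isShearLine_of_unit (p := 1) (q := 0) (x := 1) (y := 0) (by norm_num) (by norm_num),
    rfl⟩

lemma shearSup_neg (w : Matrix (Fin 2) (Fin 2) ℝ → ℝ) (s : ℝ) :
    shearSup w (-s) = shearSup w s := by
  unfold shearSup
  congr 1
  ext y
  constructor
  · rintro ⟨A, H, h, rfl⟩
    exact ⟨A, -H, h.neg, by simp⟩
  · rintro ⟨A, H, h, rfl⟩
    exact ⟨A, -H, h.neg, by simp⟩

lemma convexOn_shearSup (hw : RankOneConvexOnSL2 w)
    (hφ : ∀ X : Matrix (Fin 2) (Fin 2) ℝ, X.det = 1 → w X ≤ φ (Real.sqrt (frobSq X - 2))) :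
    ConvexOn ℝ Set.univ (shearSup w) := by
  refine ⟨convex_univ, fun s _ t _ α β hα hβ hαβ => csSup_le (shear_nonempty w _) ?_⟩
  rintro _ ⟨A, H, h, rfl⟩
  refine ((hw.convexOn_shearLine h).2 (Set.mem_univ s) (Set.mem_univ t) hα hβ hαβ).trans ?_
  have hs : w (A + s • H) ≤ shearSup w s := le_csSup ⟨_, shear_le hφ s⟩ ⟨A, H, h, rfl⟩
  have ht : w (A + t • H) ≤ shearSup w t := le_csSup ⟨_, shear_le hφ t⟩ ⟨A, H, h, rfl⟩
  simp only [smul_eq_mul]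
  gcongr

lemma shearSup_mono (hc : ConvexOn ℝ Set.univ (shearSup w)) {a b : ℝ} (ha : 0 ≤ a) (hab : a ≤ b) :
    shearSup w a ≤ shearSup w b := by
  have := hc.le_max_of_mem_Icc (x := -b) (y := b) (z := a) (Set.mem_univ _) (Set.mem_univ _)
    ⟨by linarith, hab⟩
  simpa [shearSup_neg] using this

end ShearSup

lemma distortion_eq_norm (X : Matrix (Fin 2) (Fin 2) ℝ) :
    distortion X = ‖(⟨X 0 0 - X 1 1, X 0 1 + X 1 0⟩ : ℂ)‖ := by
  rw [distortion, Complex.norm_eq_sqrt_sq_add_sq]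
  congr 1
  simp [frobSq, Fin.sum_univ_two, Matrix.det_fin_two]
  ring

lemma convexOn_distortion : ConvexOn ℝ Set.univ distortion := by
  refine ⟨convex_univ, fun X _ Y _ α β hα hβ _ => ?_⟩
  simp only [distortion_eq_norm, smul_eq_mul]
  rw [← abs_of_nonneg hα, ← abs_of_nonneg hβ, ← Real.norm_eq_abs, ← Real.norm_eq_abs,
    ← norm_smul, ← norm_smul, Real.norm_of_nonneg hα, Real.norm_of_nonneg hβ]
  refine le_trans (le_of_eq ?_) (norm_add_le _ _)
  congr 1
  apply Complex.ext <;> simp <;> ring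

/-- The key step: at a given `F ∈ SL(2)`, a rank-one convex minorant on `SL(2)` is dominated by a
convex minorant of the extension. -/
lemma exists_convex_minorant {w : Matrix (Fin 2) (Fin 2) ℝ → ℝ} {φ : ℝ → ℝ}
    (hw : RankOneConvexOnSL2 w)
    (hφ : ∀ X : Matrix (Fin 2) (Fin 2) ℝ, X.det = 1 → w X ≤ φ (Real.sqrt (frobSq X - 2)))
    {F : Matrix (Fin 2) (Fin 2) ℝ} (hF : F.det = 1) :
    ∃ v : Matrix (Fin 2) (Fin 2) ℝ → ℝ, ConvexOn ℝ Set.univ v ∧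
      (∀ X, v X ≤ φ (Real.sqrt (frobSq X - 2 * X.det))) ∧ w F ≤ v F := by
  have hc := convexOn_shearSup hw hφ
  refine ⟨fun X => shearSup w (distortion X), ⟨convex_univ, ?_⟩, fun X => ?_, ?_⟩
  · intro X _ Y _ α β hα hβ hαβ
    refine (shearSup_mono hc (Real.sqrt_nonneg _)
      (convexOn_distortion.2 (Set.mem_univ X) (Set.mem_univ Y) hα hβ hαβ)).trans ?_
    exact hc.2 (Set.mem_univ _) (Set.mem_univ _) hα hβ hαβ
  · refine (csSup_le (shear_nonempty w _) (shear_le hφ _)).trans_eq ?_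
    rw [distortion, abs_of_nonneg (Real.sqrt_nonneg _)]
  · obtain ⟨A, H, s, h, rfl⟩ := exists_shearLine hF
    have hd : distortion (A + s • H) = |s| := by
      rw [distortion, h.1 s, h.2 s, mul_one, add_sub_cancel_left, Real.sqrt_sq_eq_abs]
    have hs : w (A + s • H) ≤ shearSup w s := le_csSup ⟨_, shear_le hφ s⟩ ⟨A, H, h, rfl⟩
    change _ ≤ shearSup w (distortion (A + s • H))
    rw [hd]
    rcases abs_choice s with hs' | hs' <;> rw [hs']
    · exact hs
    · rwa [shearSup_neg]

lemma ConvexOn.rankOneConvexM {w : Matrix (Fin 2) (Fin 2) ℝ → ℝ} (hw : ConvexOn ℝ Set.univ w) :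
    RankOneConvexM w := by
  intro F H _ t ht
  have key := hw.2 (Set.mem_univ F) (Set.mem_univ (F + H)) (sub_nonneg.mpr ht.2) ht.1
    (sub_add_cancel 1 t)
  have e : (1 - t) • F + t • (F + H) = F + t • H := by module
  rwa [e] at key

lemma RankOneConvexM.onSL2 {w : Matrix (Fin 2) (Fin 2) ℝ → ℝ} (hw : RankOneConvexM w) :
    RankOneConvexOnSL2 w :=
  fun F H hH _ _ => hw F H hH

/-- Suprema agree when the smaller set is cofinal in the larger one. -/
lemma csSup_eq_of_cofinal {S T : Set ℝ} (hST : S ⊆ T) (hT : BddAbove T) (hne : T.Nonempty)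
    (h : ∀ y ∈ T, ∃ z ∈ S, y ≤ z) : sSup T = sSup S := by
  obtain ⟨y, hy⟩ := hne
  obtain ⟨z, hz, _⟩ := h y hy
  refine le_antisymm (csSup_le ⟨y, hy⟩ fun u hu => ?_) (csSup_le_csSup hT ⟨z, hz⟩ hST)
  obtain ⟨v, hv, huv⟩ := h u hu
  exact huv.trans (le_csSup (hT.mono hST) hv)

/-- Corollary 3.6: the incompressible envelopes agree with the restrictions of the
unconstrained envelopes of the conformal-type extension `W̄(F) = φ̃(√(‖F‖² − 2 det F))`. -/
theorem envelopes_eq_envelopes_of_extension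
    (W : Matrix (Fin 2) (Fin 2) ℝ → ℝ)
    (hobj : ∀ F R : Matrix (Fin 2) (Fin 2) ℝ, F.det = 1 → SO2 R →
      W (R * F) = W F ∧ W (F * R) = W F)
    (hbd : ∃ c : ℝ, ∀ F : Matrix (Fin 2) (Fin 2) ℝ, F.det = 1 → c ≤ W F)
    (φt : ℝ → ℝ) (heven : ∀ t : ℝ, φt (-t) = φt t)
    (hrep : ∀ F : Matrix (Fin 2) (Fin 2) ℝ, F.det = 1 →
      W F = φt (Real.sqrt (frobSq F - 2))) :
    ∀ F : Matrix (Fin 2) (Fin 2) ℝ, F.det = 1 →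
      rankOneConvexEnvelopeSL2 W F =
        rankOneConvexEnvelopeM (fun X => φt (Real.sqrt (frobSq X - 2 * X.det))) F ∧
      convexEnvelopeSL2 W F =
        convexEnvelopeM (fun X => φt (Real.sqrt (frobSq X - 2 * X.det))) F := by
  intro F hF
  obtain ⟨c, hc⟩ := hbd
  have hext : ∀ X : Matrix (Fin 2) (Fin 2) ℝ, X.det = 1 →
      φt (Real.sqrt (frobSq X - 2 * X.det)) = W X := by
    intro X hX
    rw [hX, mul_one, hrep X hX]
  have key : ∀ w : Matrix (Fin 2) (Fin 2) ℝ → ℝ, RankOneConvexOnSL2 w →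
      (∀ X : Matrix (Fin 2) (Fin 2) ℝ, X.det = 1 → w X ≤ W X) →
      ∃ v : Matrix (Fin 2) (Fin 2) ℝ → ℝ, ConvexOn ℝ Set.univ v ∧
        (∀ X, v X ≤ φt (Real.sqrt (frobSq X - 2 * X.det))) ∧ w F ≤ v F :=
    fun w hw hwW => exists_convex_minorant hw (fun X hX => hrep X hX ▸ hwW X hX) hF
  constructor
  · refine csSup_eq_of_cofinal ?_ ⟨W F, ?_⟩ ⟨c, fun _ => c, ?_, hc, rfl⟩ ?_
    · rintro _ ⟨w, hw, hle, rfl⟩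
      exact ⟨w, hw.onSL2, fun X hX => hext X hX ▸ hle X, rfl⟩
    · rintro _ ⟨w, _, hle, rfl⟩
      exact hle F hF
    · exact (convexOn_const c convex_univ).rankOneConvexM.onSL2
    · rintro _ ⟨w, hw, hle, rfl⟩
      obtain ⟨v, hv, hvle, hwv⟩ := key w hw hle
      exact ⟨v F, ⟨v, hv.rankOneConvexM, hvle, rfl⟩, hwv⟩
  · refine csSup_eq_of_cofinal ?_ ⟨W F, ?_⟩ ⟨c, fun _ => c, ?_, hc, rfl⟩ ?_
    · rintro _ ⟨w, hw, hle, rfl⟩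
      exact ⟨w, hw, fun X hX => hext X hX ▸ hle X, rfl⟩
    · rintro _ ⟨w, _, hle, rfl⟩
      exact hle F hF
    · exact convexOn_const c convex_univ
    · rintro _ ⟨w, hw, hle, rfl⟩
      obtain ⟨v, hv, hvle, hwv⟩ := key w hw.rankOneConvexM.onSL2 hle
      exact ⟨v F, ⟨v, hv, hvle, rfl⟩, hwv⟩
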